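/- In the special case a = α = β = 0 (so b = N), the weighted Racah polynomials satisfy the symmetry relation R̂_s(n) = (−1)^{s−n}·R̂_n(s) for all integers n, s with 0 ≤ n ≤ N−1 and 0 ≤ s ≤ N−1 (i.e., the matrix (R̂_n(s)) is skew-persymmetric up to the sign (−1)^{s−n} under exchange of degree and argument). -/

import Mathlib

open Finset

/-- Rising Pochhammer symbol `(x)_k = x (x+1) ⋯ (x+k-1)` for a real `x`. -/
noncomputable def pochR (x : ℝ) (k : ℕ) : ℝ := ∏ i ∈ Finset.range k, (x + i)

/-- The `n`-th Racah polynomial in Zhu's normalization. -/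
noncomputable def racahR (a b α β : ℝ) (n : ℕ) (s : ℝ) : ℝ :=
  (1 / (Nat.factorial n : ℝ)) * pochR (a + b + α + 1) n * pochR (β + 1) n *
    pochR (a - b + 1) n *
    ∑ k ∈ Finset.range (n + 1),
      pochR (-(n : ℝ)) k * pochR (a - s) k * pochR (a + s + 1) k *
          pochR (α + β + (n : ℝ) + 1) k /
        (pochR (β + 1) k * pochR (a + b + α + 1) k * pochR (a - b + 1) k *
          (Nat.factorial k : ℝ))

/-- The Racah weight function `ρ(s)`. -/
noncomputable def racahW (a b α β : ℝ) (s : ℝ) : ℝ :=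
  Real.Gamma (a + s + 1) * Real.Gamma (b + s + α + 1) * Real.Gamma (b + α - s) *
      Real.Gamma (s - a + β + 1) /
    (Real.Gamma (b + s + 1) * Real.Gamma (b - s) * Real.Gamma (s - a + 1) *
      Real.Gamma (a - β + s + 1))

/-- The squared norm `d_n²`. -/
noncomputable def racahD2 (a b α β : ℝ) (n : ℕ) : ℝ :=
  Real.Gamma (α + n + 1) * Real.Gamma (β + n + 1) * Real.Gamma (a + b + α + n + 1) *
      Real.Gamma (b - a + α + β + n + 1) /
    ((α + β + 2 * n + 1) * Real.Gamma (n + 1) * Real.Gamma (b - a - n) *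
      Real.Gamma (α + β + n + 1) * Real.Gamma (a + b - n - β))

/-- The weighted Racah polynomial `R̂_n(s) = R_n(s) √(ρ(s)(2s+1)/d_n²)`. -/
noncomputable def racahHat (a b α β : ℝ) (n : ℕ) (s : ℝ) : ℝ :=
  racahR a b α β n s * Real.sqrt (racahW a b α β s * (2 * s + 1) / racahD2 a b α β n)

/-- `σ(s) = (s−a)(s+b)(s+a−β)(b+α−s)`. -/
noncomputable def racahSigma (a b α β : ℝ) (s : ℝ) : ℝ :=
  (s - a) * (s + b) * (s + a - β) * (b + α - s)

/-- `τ(s)`. -/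
noncomputable def racahTau (a b α β : ℝ) (s : ℝ) : ℝ :=
  a * (α + 1) * (a - β) + b * (b + α) * (β + 1) - (α + 1) * (β + 1) -
    s * (s + 1) * (α + β + 2)

/-- `λ_n = n (n+α+β+1)`. -/
noncomputable def racahLam (α β : ℝ) (n : ℕ) : ℝ := (n : ℝ) * ((n : ℝ) + α + β + 1)

/-!
The symmetry is the case `a = c = β = 0` of a duality between degree and argument. Write
`b = a + N` and `α = 2c - β`. The hypergeometric sum in `R_n(a + x)` then has the numerator
parameters `-n`, `-x`, `2c + n + 1`, `2a + x + 1`, and its denominator parameters are symmetric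
in `a` and `c`, so exchanging `(a, x)` with `(c, n)` leaves it unchanged.

The normalization respects this exchange: if `w(x) = ρ(a + x) (2(a + x) + 1)`, and `w'(n)` is its
image under `a ↔ c`, then `d_n² w'(n)` is the square of a quotient `g(n)` of Gamma values, and the
factor in front of the sum in `R_n` is `(-1)^n g(n) / g(0)`. Therefore
`R̂_n(a + x) = (-1)^n g(0)⁻¹ √(w(x) w'(n)) F(n, x)`, where only the sign is not symmetric.
-/

section Pochhammer

theorem pochR_succ (x : ℝ) (n : ℕ) : pochR x (n + 1) = pochR x n * (x + n) :=
  prod_range_succ _ _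

theorem pochR_eq_ascPochhammer_eval (x : ℝ) (n : ℕ) :
    pochR x n = (ascPochhammer ℝ n).eval x := by
  induction n with
  | zero => simp [pochR]
  | succ n ih => rw [pochR_succ, ascPochhammer_succ_eval, ih]

theorem pochR_neg_natCast_of_lt {n k : ℕ} (h : n < k) : pochR (-(n : ℝ)) k = 0 := by
  rw [pochR_eq_ascPochhammer_eval, ascPochhammer_eval_neg_coe_nat_of_lt h]

theorem pochR_one_sub (x : ℝ) (n : ℕ) : pochR (1 - x) n = (-1) ^ n * pochR (x - n) n := by
  rw [pochR_eq_ascPochhammer_eval, pochR_eq_ascPochhammer_eval, ← neg_sub x 1,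
    ascPochhammer_eval_neg_eq_descPochhammer, descPochhammer_eval_eq_ascPochhammer,
    show x - 1 - n + 1 = x - n by ring]

theorem pochR_mul_Gamma {x : ℝ} (hx : 0 < x) (n : ℕ) :
    pochR x n * Real.Gamma x = Real.Gamma (x + n) := by
  induction n with
  | zero => simp [pochR]
  | succ n ih =>
    have hxn : x + n ≠ 0 := by positivity
    rw [Nat.cast_succ, ← add_assoc, Real.Gamma_add_one hxn, ← ih, pochR_succ]
    ring

theorem pochR_eq_Gamma_div {x : ℝ} (hx : 0 < x) (n : ℕ) :
    pochR x n = Real.Gamma (x + n) / Real.Gamma x :=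
  eq_div_of_mul_eq (Real.Gamma_pos_of_pos hx).ne' (pochR_mul_Gamma hx n)

theorem pochR_one_sub_eq_Gamma_div {x : ℝ} {n : ℕ} (hx : n < x) :
    pochR (1 - x) n = (-1) ^ n * (Real.Gamma x / Real.Gamma (x - n)) := by
  rw [pochR_one_sub, pochR_eq_Gamma_div (sub_pos.mpr hx), sub_add_cancel]

end Pochhammer

section Series

/-- The `k`-th term of the sum `F(n, x)` in `R_n(a + x)`, a terminating `₄F₃` series at `1`, for
`b = a + N` and `α = 2c - β`. -/
noncomputable def racahTerm (a c β N : ℝ) (n x k : ℕ) : ℝ :=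
  pochR (-(n : ℝ)) k * pochR (-(x : ℝ)) k * pochR (2 * a + x + 1) k * pochR (2 * c + n + 1) k /
    (pochR (β + 1) k * pochR (2 * a + 2 * c - β + N + 1) k * pochR (1 - N) k * k.factorial)

/-- The sum `F(n, x)` in `R_n(a + x)`, with the summation range `k ≤ n` of the Racah polynomial. -/
noncomputable def racahSeries (a c β N : ℝ) (n x : ℕ) : ℝ :=
  ∑ k ∈ range (n + 1), racahTerm a c β N n x k

theorem racahTerm_comm (a c β N : ℝ) (n x k : ℕ) :
    racahTerm a c β N n x k = racahTerm c a β N x n k := by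
  rw [racahTerm, racahTerm, add_comm (2 * c) (2 * a)]
  ring

theorem racahTerm_of_lt (a c β N : ℝ) {n k : ℕ} (h : n < k) (x : ℕ) :
    racahTerm a c β N n x k = 0 := by
  simp [racahTerm, pochR_neg_natCast_of_lt h]

theorem racahSeries_eq_sum_range (a c β N : ℝ) {n m : ℕ} (hnm : n ≤ m) (x : ℕ) :
    racahSeries a c β N n x = ∑ k ∈ range (m + 1), racahTerm a c β N n x k :=
  sum_subset (range_mono (by lia)) fun k _ hk ↦ racahTerm_of_lt a c β N (by simpa using hk) x

theorem racahSeries_comm (a c β N : ℝ) (n x : ℕ) :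
    racahSeries a c β N n x = racahSeries c a β N x n := by
  rw [racahSeries_eq_sum_range a c β N (le_max_left n x),
    racahSeries_eq_sum_range c a β N (le_max_right n x)]
  exact sum_congr rfl fun k _ ↦ racahTerm_comm a c β N n x k

theorem racahR_eq_mul_racahSeries (a c β N : ℝ) (n x : ℕ) :
    racahR a (a + N) (2 * c - β) β n (a + x) =
      1 / n.factorial * pochR (2 * a + 2 * c - β + N + 1) n * pochR (β + 1) n * pochR (1 - N) n *
        racahSeries a c β N n x := by
  have h₁ : a + (a + N) + (2 * c - β) + 1 = 2 * a + 2 * c - β + N + 1 := by ring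
  have h₂ : a - (a + N) + 1 = 1 - N := by ring
  have h₃ : a - (a + x) = -(x : ℝ) := by ring
  have h₄ : a + (a + x) + 1 = 2 * a + x + 1 := by ring
  have h₅ : 2 * c - β + β + n + 1 = 2 * c + n + 1 := by ring
  simp only [racahR, racahSeries, racahTerm, h₁, h₂, h₃, h₄, h₅]

end Series

section Normalization

/-- The quotient `g(n)` of Gamma values whose square is `d_n² w'(n)`. The parameter `A` stands for
`a + b + α + 1`, and `n!` is written as a Gamma value to match `d_n²`. -/
noncomputable def racahGammaQuot (A β N : ℝ) (n : ℕ) : ℝ :=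
  Real.Gamma (A + n) * Real.Gamma (β + 1 + n) / (Real.Gamma (n + 1) * Real.Gamma (N - n))

/-- The weight `w(x) = ρ(a + x) (2(a + x) + 1)` under the square root of the weighted Racah
polynomials, for `b = a + N` and `α = 2c - β`. -/
noncomputable def racahLatticeWeight (a c β N : ℝ) (x : ℕ) : ℝ :=
  racahW a (a + N) (2 * c - β) β (a + x) * (2 * (a + x) + 1)

theorem racahGammaQuot_pos {A β N : ℝ} {n : ℕ} (hA : 0 < A) (hβ : -1 < β) (hn : n < N) :
    0 < racahGammaQuot A β N n := by
  have hβn : 0 < β + 1 + n := by linarith [n.cast_nonneg (α := ℝ)]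
  have hNn : 0 < N - n := sub_pos.mpr hn
  have hΓA := Real.Gamma_pos_of_pos (s := A + n) (by positivity)
  have hΓβ := Real.Gamma_pos_of_pos hβn
  have hΓn := Real.Gamma_pos_of_pos (s := n + 1) (by positivity)
  have hΓN := Real.Gamma_pos_of_pos hNn
  exact div_pos (mul_pos hΓA hΓβ) (mul_pos hΓn hΓN)

theorem pochR_normalization_eq_racahGammaQuot {A β N : ℝ} {n : ℕ} (hA : 0 < A) (hβ : -1 < β)
    (hn : n < N) :
    1 / n.factorial * pochR A n * pochR (β + 1) n * pochR (1 - N) n =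
      (-1) ^ n * (racahGammaQuot A β N n / racahGammaQuot A β N 0) := by
  rw [pochR_eq_Gamma_div hA, pochR_eq_Gamma_div (by linarith), pochR_one_sub_eq_Gamma_div hn,
    ← Real.Gamma_nat_eq_factorial]
  simp only [racahGammaQuot, Nat.cast_zero, add_zero, zero_add, sub_zero, Real.Gamma_one, one_mul]
  field_simp

theorem racahW_eq (a c β N : ℝ) (x : ℕ) :
    racahW a (a + N) (2 * c - β) β (a + x) =
      Real.Gamma (2 * a + x + 1) * Real.Gamma (2 * a + 2 * c - β + N + 1 + x) *
          Real.Gamma (N + 2 * c - β - x) * Real.Gamma (β + 1 + x) /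
        (Real.Gamma (2 * a + N + x + 1) * Real.Gamma (N - x) * Real.Gamma (x + 1) *
          Real.Gamma (2 * a - β + x + 1)) := by
  unfold racahW
  ring_nf

theorem racahD2_eq (a c β N : ℝ) (n : ℕ) :
    racahD2 a (a + N) (2 * c - β) β n =
      Real.Gamma (2 * c - β + n + 1) * Real.Gamma (β + 1 + n) *
          Real.Gamma (2 * a + 2 * c - β + N + 1 + n) * Real.Gamma (2 * c + N + n + 1) /
        ((2 * (c + n) + 1) * Real.Gamma (n + 1) * Real.Gamma (N - n) *
          Real.Gamma (2 * c + n + 1) * Real.Gamma (N + 2 * a - β - n)) := by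
  unfold racahD2
  ring_nf

theorem racahLatticeWeight_pos {a c β N : ℝ} {x : ℕ} (ha : -1 / 2 < a) (hβ : -1 < β)
    (hβa : β < 2 * a + 1) (hβc : β < 2 * c + 1) (hx : x + 1 ≤ N) :
    0 < racahLatticeWeight a c β N x := by
  have : (0 : ℝ) ≤ x := x.cast_nonneg
  rw [racahLatticeWeight, racahW_eq]
  refine mul_pos (div_pos ?_ ?_) (by linarith) <;>
    refine mul_pos (mul_pos (mul_pos ?_ ?_) ?_) ?_ <;>
      exact Real.Gamma_pos_of_pos (by linarith)

theorem racahD2_mul_racahLatticeWeight {a c β N : ℝ} {n : ℕ} (hc : -1 / 2 < c)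
    (hβa : β < 2 * a + 1) (hβc : β < 2 * c + 1) (hn : n + 1 ≤ N) :
    racahD2 a (a + N) (2 * c - β) β n * racahLatticeWeight c a β N n =
      racahGammaQuot (2 * a + 2 * c - β + N + 1) β N n ^ 2 := by
  have : (0 : ℝ) ≤ n := n.cast_nonneg
  have hlin : 2 * (c + n) + 1 ≠ 0 := by linarith
  have hΓ₁ := (Real.Gamma_pos_of_pos (s := 2 * c - β + n + 1) (by linarith)).ne'
  have hΓ₂ := (Real.Gamma_pos_of_pos (s := 2 * c + N + n + 1) (by linarith)).ne'
  have hΓ₃ := (Real.Gamma_pos_of_pos (s := 2 * c + n + 1) (by linarith)).ne'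
  have hΓ₄ := (Real.Gamma_pos_of_pos (s := N + 2 * a - β - n) (by linarith)).ne'
  rw [racahD2_eq, racahLatticeWeight, racahW_eq, racahGammaQuot, add_comm (2 * c) (2 * a)]
  field_simp

end Normalization

section Duality

theorem racahHat_eq {a c β N : ℝ} {n : ℕ} (hc : -1 / 2 < c) (hβ : -1 < β)
    (hβa : β < 2 * a + 1) (hβc : β < 2 * c + 1) (hn : n + 1 ≤ N) (x : ℕ) :
    racahHat a (a + N) (2 * c - β) β n (a + x) =
      (-1) ^ n * (racahSeries a c β N n x *
        √(racahLatticeWeight a c β N x * racahLatticeWeight c a β N n) /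
          racahGammaQuot (2 * a + 2 * c - β + N + 1) β N 0) := by
  have hnN : (n : ℝ) < N := by linarith
  have hA : 0 < 2 * a + 2 * c - β + N + 1 := by linarith [n.cast_nonneg (α := ℝ)]
  have hg := racahGammaQuot_pos hA hβ hnN
  have hw' := racahLatticeWeight_pos hc hβ hβc hβa hn
  have hd := eq_div_of_mul_eq hw'.ne' (racahD2_mul_racahLatticeWeight hc hβa hβc hn)
  have hsqrt : √(racahLatticeWeight a c β N x / racahD2 a (a + N) (2 * c - β) β n) =
      √(racahLatticeWeight a c β N x * racahLatticeWeight c a β N n) /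
        racahGammaQuot (2 * a + 2 * c - β + N + 1) β N n := by
    rw [hd, div_div_eq_mul_div, Real.sqrt_div' _ (sq_nonneg _), Real.sqrt_sq hg.le]
  rw [racahHat, ← racahLatticeWeight, hsqrt, racahR_eq_mul_racahSeries,
    pochR_normalization_eq_racahGammaQuot hA hβ hnN]
  generalize 2 * a + 2 * c - β + N + 1 = A at hg ⊢
  field_simp

theorem racah_special_case_symmetry_general {a c β N : ℝ} {n s : ℕ} (ha : -1 / 2 < a)
    (hc : -1 / 2 < c) (hβ : -1 < β) (hβa : β < 2 * a + 1) (hβc : β < 2 * c + 1)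
    (hn : n + 1 ≤ N) (hs : s + 1 ≤ N) :
    racahHat c (c + N) (2 * a - β) β s (c + n) =
      (-1) ^ ((s : ℤ) - n) * racahHat a (a + N) (2 * c - β) β n (a + s) := by
  have hsign : (-1 : ℝ) ^ ((s : ℤ) - n) * (-1) ^ n = (-1) ^ s := by
    rw [← zpow_natCast, ← zpow_add₀ (by norm_num), sub_add_cancel, zpow_natCast]
  rw [racahHat_eq ha hβ hβc hβa hs n, racahHat_eq hc hβ hβa hβc hn s, ← mul_assoc, hsign,
    racahSeries_comm c a, mul_comm (racahLatticeWeight c a β N n), add_comm (2 * c) (2 * a)]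

end Duality

theorem racah_special_case_symmetry
    (N : ℕ) (hN : 2 ≤ N) (n s : ℕ) (hn : n ≤ N - 1) (hs : s ≤ N - 1) :
    racahHat 0 (N : ℝ) 0 0 s (n : ℝ) =
      (-1 : ℝ) ^ ((s : ℤ) - (n : ℤ)) * racahHat 0 (N : ℝ) 0 0 n (s : ℝ) := by
  have hn' : (n : ℝ) + 1 ≤ N := by exact_mod_cast (by lia : n + 1 ≤ N)
  have hs' : (s : ℝ) + 1 ≤ N := by exact_mod_cast (by lia : s + 1 ≤ N)
  simpa using racah_special_case_symmetry_general (a := 0) (c := 0) (β := 0) (by norm_num)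
    (by norm_num) (by norm_num) (by norm_num) (by norm_num) hn' hs'
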